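/- arXiv:1104.0315 — 6 statements merged into one kernel-verified Lean document; each statement's English description precedes it below -/
import Mathlib

section
/- Every finite non-cyclic group G admits an unbalanced pair: there exist finite G-sets X and Y such that for every g ∈ G the number of fixed points of g on X equals the number of fixed points of g on Y, and such that for some natural number n the number of G-orbits of cardinality n in X differs from the number of G-orbits of cardinality n in Y. -/
open MulAction

/-- Two `G`-sets are *linearly equivalent* if every `g ∈ G` has the same number of
fixed points in each. -/
def IsLinEquiv (G : Type) [Group G] (X Y : Type) [MulAction G X] [MulAction G Y] : Prop :=
  ∀ g : G, Nat.card (fixedBy X g) = Nat.card (fixedBy Y g)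

/-- The number of `G`-orbits of cardinality `n` in the `G`-set `X`. -/
noncomputable def orbitCountOfSize (G : Type) [Group G] (X : Type) [MulAction G X] (n : ℕ) : ℕ :=
  Nat.card {o : orbitRel.Quotient G X // Nat.card o.orbit = n}

/-- An *unbalanced pair* of `G`-sets: linearly equivalent, but differing in the number of
orbits of some cardinality. -/
def IsUnbalancedPair (G : Type) [Group G] (X Y : Type) [MulAction G X] [MulAction G Y] : Prop :=
  IsLinEquiv G X Y ∧ ∃ n : ℕ, orbitCountOfSize G X n ≠ orbitCountOfSize G Y n

/-!
A finite `G`-set `Z` is recorded by its marks `H ↦ |Z ^ H|`, which turn disjoint unions into sums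
and products into products; so the differences of marks of finite `G`-sets form a ring. Write such
a difference as `f = marks X - marks Y`. Then `X` and `Y` are linearly equivalent iff `f` vanishes
on all cyclic subgroups, and they have different numbers of orbits of size `1` iff `f G ≠ 0`.

Suppose that every element of `G` fixes a point of `Z` but that `G` has no common fixed point.
Then `∏ k ∈ [1, |Z|], (k - marks Z)` vanishes on cyclic subgroups, where `marks Z` takes values in
`[1, |Z|]`, and equals `|Z|! ≠ 0` at `G`. If finitely many proper subgroups `H i` of finite index
cover `G`, then `Z = ∐ i, G ⧸ H i` is such a `G`-set, and by B. H. Neumann's lemma the subgroups of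
infinite index can be dropped from any finite cover. A finite non-cyclic group is covered by its
cyclic subgroups.
-/

section Marks

variable (G X Y : Type*) [Group G] [MulAction G X] [MulAction G Y]

/-- The marks of the `G`-set `X` (its row of Burnside's table of marks): the number of fixed points
of each subgroup of `G`, as an integer so that marks can be subtracted. -/
noncomputable def marks (H : Subgroup G) : ℤ :=
  Nat.card (fixedPoints H X)

lemma marks_zpowers (g : G) : marks G X (Subgroup.zpowers g) = Nat.card (fixedBy X g) := by
  have fixedPoints_eq : fixedPoints (Subgroup.zpowers g) X = fixedBy X g := by
    ext x
    simpa [Subgroup.smul_def, Subgroup.mem_zpowers_iff] using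
      ⟨fun hx ↦ by simpa using hx 1, mem_fixedBy_zpow⟩
  rw [marks, fixedPoints_eq]

lemma marks_top : marks G X ⊤ = Nat.card (fixedPoints G X) := by
  have fixedPoints_eq : fixedPoints (⊤ : Subgroup G) X = fixedPoints G X := by
    ext x
    simp [Subgroup.smul_def]
  rw [marks, fixedPoints_eq]

lemma marks_punit : marks G PUnit = 1 := by
  ext H
  simp [marks, fixedPoints_of_subsingleton]

lemma marks_sum [Finite X] [Finite Y] : marks G (X ⊕ Y) = marks G X + marks G Y := by
  ext H
  rw [Pi.add_apply, marks, marks, marks, ← Nat.cast_add, ← Nat.card_sum]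
  refine congrArg _ (Nat.card_congr (Equiv.subtypeSum.trans ?_))
  exact .sumCongr (.subtypeEquivRight fun x ↦ by simp [Subgroup.smul_def])
    (.subtypeEquivRight fun y ↦ by simp [Subgroup.smul_def])

lemma marks_prod : marks G (X × Y) = marks G X * marks G Y := by
  ext H
  have fixedPoints_eq : fixedPoints H (X × Y) = fixedPoints H X ×ˢ fixedPoints H Y := by
    ext ⟨x, y⟩
    simp [Prod.ext_iff, forall_and]
  rw [Pi.mul_apply, marks, marks, marks, fixedPoints_eq, ← Nat.cast_mul, ← Nat.card_prod,
    Nat.card_congr (Equiv.Set.prod _ _)]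

end Marks

/-- The ring of marks of virtual finite `G`-sets, that is, of formal differences of finite `G`-sets.
It is the image of the Burnside ring of `G` under its mark homomorphism. -/
def virtualMarks (G : Type*) [Group G] : Subring (Subgroup G → ℤ) where
  carrier := {f | ∃ (X Y : Type) (_ : Finite X) (_ : Finite Y) (_ : MulAction G X)
    (_ : MulAction G Y), f = marks G X - marks G Y}
  zero_mem' :=
    ⟨PUnit, PUnit, inferInstance, inferInstance, inferInstance, inferInstance, (sub_self _).symm⟩
  one_mem' := by
    refine ⟨PUnit ⊕ PUnit, PUnit, inferInstance, inferInstance, inferInstance, inferInstance, ?_⟩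
    rw [marks_sum, marks_punit, add_sub_cancel_right]
  add_mem' := by
    rintro _ _ ⟨X, Y, _, _, _, _, rfl⟩ ⟨X', Y', _, _, _, _, rfl⟩
    refine ⟨X ⊕ X', Y ⊕ Y', inferInstance, inferInstance, inferInstance, inferInstance, ?_⟩
    rw [marks_sum, marks_sum, add_sub_add_comm]
  neg_mem' := by
    rintro _ ⟨X, Y, _, _, _, _, rfl⟩
    exact ⟨Y, X, inferInstance, inferInstance, inferInstance, inferInstance, neg_sub _ _⟩
  mul_mem' := by
    rintro _ _ ⟨X, Y, _, _, _, _, rfl⟩ ⟨X', Y', _, _, _, _, rfl⟩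
    refine ⟨X × X' ⊕ Y × Y', X × Y' ⊕ Y × X', inferInstance, inferInstance, inferInstance,
      inferInstance, ?_⟩
    simp only [marks_sum, marks_prod]
    ring

lemma marks_mem_virtualMarks (G : Type*) [Group G] (X : Type) [Finite X] [MulAction G X] :
    marks G X ∈ virtualMarks G := by
  refine ⟨X ⊕ PUnit, PUnit, inferInstance, inferInstance, inferInstance, inferInstance, ?_⟩
  rw [marks_sum, add_sub_cancel_right]

/-- The existence of an unbalanced pair of finite `G`-sets. -/
def HasUnbalancedPair (G : Type) [Group G] : Prop :=
  ∃ (X Y : Type) (_ : Fintype X) (_ : Fintype Y) (ix : MulAction G X) (iy : MulAction G Y),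
    @IsUnbalancedPair G _ X Y ix iy

section UnbalancedPairs

variable {G : Type} [Group G]

lemma orbitCountOfSize_one (X : Type) [MulAction G X] :
    orbitCountOfSize G X 1 = Nat.card (fixedPoints G X) := by
  have card_orbit_eq_one_iff (x : X) : Nat.card (orbit G x) = 1 ↔ x ∈ fixedPoints G X := by
    rw [Nat.card_eq_one_iff_unique, ← subsingleton_orbit_iff_mem_fixedPoints,
      Set.subsingleton_coe, and_iff_left (nonempty_orbit x).to_subtype]
  refine (Nat.card_congr (.ofBijective
    (fun x ↦ ⟨Quotient.mk'' x.1, (card_orbit_eq_one_iff x.1).2 x.2⟩) ⟨?_, ?_⟩)).symm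
  · rintro ⟨x, hx⟩ ⟨y, hy⟩ hxy
    have x_mem_orbit : x ∈ orbit G y := Quotient.eq''.1 (congrArg Subtype.val hxy)
    exact Subtype.ext (mem_fixedPoints'.1 hy x x_mem_orbit)
  · rintro ⟨⟨x⟩, hx⟩
    exact ⟨⟨x, (card_orbit_eq_one_iff x).1 hx⟩, rfl⟩

lemma hasUnbalancedPair_of_mem_virtualMarks {f : Subgroup G → ℤ} (hf : f ∈ virtualMarks G)
    (hf_zpowers : ∀ g, f (Subgroup.zpowers g) = 0) (hf_top : f ⊤ ≠ 0) :
    HasUnbalancedPair G := by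
  obtain ⟨X, Y, _, _, _, _, rfl⟩ := hf
  refine ⟨X, Y, .ofFinite X, .ofFinite Y, inferInstance, inferInstance, fun g ↦ ?_, 1, ?_⟩
  · simpa [marks_zpowers, sub_eq_zero] using hf_zpowers g
  · simpa [marks_top, sub_eq_zero, orbitCountOfSize_one] using hf_top

theorem hasUnbalancedPair_of_forall_nonempty_fixedBy (Z : Type) [Finite Z] [MulAction G Z]
    (hfixedBy : ∀ g : G, (fixedBy Z g).Nonempty) (hfixedPoints : fixedPoints G Z = ∅) :
    HasUnbalancedPair G := by
  refine hasUnbalancedPair_of_mem_virtualMarks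
    (f := ∏ k ∈ Finset.Icc 1 (Nat.card Z), ((k : Subgroup G → ℤ) - marks G Z))
    (prod_mem fun k _ ↦ sub_mem (natCast_mem _ k) (marks_mem_virtualMarks G Z))
    (fun g ↦ ?_) ?_
  · have card_mem_Icc : Nat.card (fixedBy Z g) ∈ Finset.Icc 1 (Nat.card Z) :=
      have := (hfixedBy g).to_subtype
      Finset.mem_Icc.2 ⟨Nat.card_pos, Finite.card_subtype_le _⟩
    rw [Finset.prod_apply]
    exact Finset.prod_eq_zero card_mem_Icc (by simp [marks_zpowers])
  · rw [Finset.prod_apply, Finset.prod_ne_zero_iff]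
    intro k hk
    have k_pos := (Finset.mem_Icc.1 hk).1
    simp [marks_top, hfixedPoints, Nat.one_le_iff_ne_zero.1 k_pos]

end UnbalancedPairs

section Covers

variable {G : Type*} [Group G] {ι : Type*} {H : ι → Subgroup G}

open scoped Pointwise in
lemma exists_finiteIndex_and_mem_of_cover [Finite ι] (hcover : ∀ g, ∃ i, g ∈ H i) (g : G) :
    ∃ i, (H i).FiniteIndex ∧ g ∈ H i := by
  classical
  have := Fintype.ofFinite ι
  have hcosets : ⋃ i ∈ Finset.univ, (1 : G) • (H i : Set G) = Set.univ := by
    simpa [Set.eq_univ_iff_forall] using hcover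
  simpa using Set.eq_univ_iff_forall.1 (Subgroup.leftCoset_cover_filter_FiniteIndex hcosets) g

lemma nonempty_fixedBy_sigma_quotient {g : G} {i : ι} (hg : g ∈ H i) :
    (fixedBy (Σ i, G ⧸ H i) g).Nonempty := by
  have g_smul_one : g • ((1 : G) : G ⧸ H i) = (1 : G) := by
    rwa [← mem_stabilizer_iff, stabilizer_quotient]
  exact ⟨⟨i, (1 : G)⟩, congrArg (Sigma.mk i) g_smul_one⟩

lemma fixedPoints_sigma_quotient_eq_empty (hproper : ∀ i, H i ≠ ⊤) :
    fixedPoints G (Σ i, G ⧸ H i) = ∅ := by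
  refine Set.eq_empty_of_forall_notMem fun ⟨i, x⟩ hx ↦ hproper i ?_
  have smul_x (g : G) : g • x = x := sigma_mk_injective (β := fun i ↦ G ⧸ H i) (hx g)
  refine QuotientGroup.subgroup_eq_top_of_subsingleton _ (subsingleton_of_forall_eq x fun y ↦ ?_)
  obtain ⟨g, rfl⟩ := exists_smul_eq G x y
  exact smul_x g

end Covers

theorem every_finite_noncyclic_group_has_unbalanced_pair_general
    (G : Type) [Group G] {ι : Type} [Finite ι] (H : ι → Subgroup G)
    (hproper : ∀ i, H i ≠ ⊤) (hcover : ∀ g, ∃ i, g ∈ H i) :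
    HasUnbalancedPair G := by
  let K : {i // (H i).FiniteIndex} → Subgroup G := fun i ↦ H i
  have (i : {i // (H i).FiniteIndex}) : Finite (G ⧸ K i) :=
    have := i.2
    Subgroup.finite_quotient_of_finiteIndex
  refine hasUnbalancedPair_of_forall_nonempty_fixedBy (Σ i, G ⧸ K i) (fun g ↦ ?_)
    (fixedPoints_sigma_quotient_eq_empty fun i ↦ hproper i)
  obtain ⟨i, finiteIndex, g_mem⟩ := exists_finiteIndex_and_mem_of_cover hcover g
  exact nonempty_fixedBy_sigma_quotient (i := ⟨i, finiteIndex⟩) g_mem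

/-- Every finite non-cyclic group admits an unbalanced pair of finite `G`-sets. -/
theorem every_finite_noncyclic_group_has_unbalanced_pair
    (G : Type) [Group G] [Fintype G] (h : ¬ IsCyclic G) :
    ∃ (X Y : Type) (_ : Fintype X) (_ : Fintype Y)
      (ix : MulAction G X) (iy : MulAction G Y),
      @IsUnbalancedPair G _ X Y ix iy :=
  every_finite_noncyclic_group_has_unbalanced_pair_general G Subgroup.zpowers
    (fun g hg ↦ h (isCyclic_iff_exists_zpowers_eq_top.2 ⟨g, hg⟩))
    fun g ↦ ⟨g, Subgroup.mem_zpowers g⟩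
end

section
/- A finite group G is cyclic if and only if any two linearly equivalent finite G-sets are isomorphic, i.e. whenever finite G-sets X and Y satisfy that every g ∈ G has the same number of fixed points on X as on Y, there exists a G-equivariant bijection between X and Y. (This is the statement that the natural map from the Burnside ring Ω(G) to the representation ring R(G), sending X to ℂ[X], is injective if and only if G is cyclic.) -/
open MulAction

/-!
Call the number of points of `X` fixed by a subgroup `H` the mark of `H` on `X`. Burnside's theorem
says that a finite `G`-set is determined up to isomorphism by its marks: if `X` and `Y` have the
same marks, then a maximal point stabilizer of `X` is also a point stabilizer of `Y`, so isomorphic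
orbits can be split off from both sides. When `G` is cyclic, every mark is the number of fixed
points of a single element.

Conversely, let `T` be the disjoint union of the `G`-sets `G ⧸ ⟨g⟩`. Every element of `G` has a
fixed point on `T`, so the marks of cyclic subgroups on `T` are roots of the polynomial
`p = (t - 1)(t - 2) ⋯ (t - |T|)`. Marks are additive and multiplicative, so separating the positive
from the negative terms of `p` evaluated at `T` yields two linearly equivalent `G`-sets. If these
are isomorphic then the number of points of `T` fixed by all of `G` is a root of `p` too, hence
nonzero, and `G` can only fix a point of `G ⧸ ⟨g⟩` if `⟨g⟩ = G`.
-/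

universe u v w

/-- Linear equivalence of `G`-sets: equality of permutation characters, encoded as natural numbers.
An infinite fixed-point set counts as `0`, so the notion is meant for finite `G`-sets. -/
def LinearlyEquivalent (G : Type u) (X : Type v) (Y : Type w) [Monoid G] [MulAction G X]
    [MulAction G Y] : Prop :=
  ∀ g : G, Nat.card (fixedBy X g) = Nat.card (fixedBy Y g)

/-- Isomorphism of `G`-sets, as the mere existence of an equivariant bijection. -/
def EquivariantlyEquivalent (G : Type u) (X : Type v) (Y : Type w) [SMul G X] [SMul G Y] : Prop :=
  ∃ e : X ≃ Y, ∀ (g : G) (x : X), e (g • x) = g • e x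

/-- Burnside's mark of the subgroup `H` on the `G`-set `X`: the number of points fixed by `H`
(with value `0` if there are infinitely many). -/
noncomputable def mark {G : Type u} [Group G] (H : Subgroup G) (X : Type v) [MulAction G X] : ℕ :=
  Nat.card (fixedPoints H X)

namespace EquivariantlyEquivalent

variable {G : Type*} {X X' Y Y' Z : Type*}

section SMul

variable [SMul G X] [SMul G X'] [SMul G Y] [SMul G Y'] [SMul G Z]

theorem symm : EquivariantlyEquivalent G X Y → EquivariantlyEquivalent G Y X := by
  rintro ⟨e, he⟩
  exact ⟨e.symm, fun g y => by rw [Equiv.symm_apply_eq, he, e.apply_symm_apply]⟩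

theorem trans : EquivariantlyEquivalent G X Y → EquivariantlyEquivalent G Y Z →
    EquivariantlyEquivalent G X Z := by
  rintro ⟨e, he⟩ ⟨f, hf⟩
  exact ⟨e.trans f, fun g x => by simp only [Equiv.trans_apply, he, hf]⟩

theorem sumCongr : EquivariantlyEquivalent G X X' → EquivariantlyEquivalent G Y Y' →
    EquivariantlyEquivalent G (X ⊕ Y) (X' ⊕ Y') := by
  rintro ⟨e, he⟩ ⟨f, hf⟩
  refine ⟨e.sumCongr f, ?_⟩
  rintro g (x | y)
  · exact congrArg Sum.inl (he g x)
  · exact congrArg Sum.inr (hf g y)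

end SMul

theorem mark_eq [Group G] [MulAction G X] [MulAction G Y] (h : EquivariantlyEquivalent G X Y)
    (H : Subgroup G) : mark H X = mark H Y := by
  obtain ⟨e, he⟩ := h
  refine Nat.card_congr (e.subtypeEquiv fun x => forall_congr' fun k => ?_)
  rw [Subgroup.smul_def, Subgroup.smul_def, ← he, e.apply_eq_iff_eq]

end EquivariantlyEquivalent

section Marks

variable {G : Type*} [Group G] (X Y : Type*) [MulAction G X] [MulAction G Y]

variable {X} in
theorem mem_fixedPoints_subgroup_iff_le_stabilizer {H : Subgroup G} {x : X} :
    x ∈ fixedPoints H X ↔ H ≤ stabilizer G x :=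
  Subtype.forall

theorem mark_pos_iff [Finite X] {H : Subgroup G} :
    0 < mark H X ↔ ∃ x : X, H ≤ stabilizer G x := by
  simp only [mark, Finite.card_pos_iff, nonempty_subtype,
    mem_fixedPoints_subgroup_iff_le_stabilizer]

theorem mark_le_card [Finite X] (H : Subgroup G) : mark H X ≤ Nat.card X :=
  Finite.card_subtype_le _

theorem mark_zpowers (g : G) : mark (Subgroup.zpowers g) X = Nat.card (fixedBy X g) :=
  Nat.card_congr <| Equiv.subtypeEquivRight fun x => by
    rw [mem_fixedPoints_subgroup_iff_le_stabilizer, Subgroup.zpowers_le, mem_stabilizer_iff,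
      mem_fixedBy]

theorem mark_sum [Finite X] [Finite Y] (H : Subgroup G) :
    mark H (X ⊕ Y) = mark H X + mark H Y := by
  have mem_inl (x : X) : (Sum.inl x : X ⊕ Y) ∈ fixedPoints H (X ⊕ Y) ↔ x ∈ fixedPoints H X :=
    forall_congr' fun _ => Sum.inl_injective.eq_iff
  have mem_inr (y : Y) : (Sum.inr y : X ⊕ Y) ∈ fixedPoints H (X ⊕ Y) ↔ y ∈ fixedPoints H Y :=
    forall_congr' fun _ => Sum.inr_injective.eq_iff
  rw [mark, mark, mark, ← Nat.card_sum]
  exact Nat.card_congr <| Equiv.subtypeSum.trans <|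
    (Equiv.subtypeEquivRight mem_inl).sumCongr (Equiv.subtypeEquivRight mem_inr)

theorem mark_prod (H : Subgroup G) : mark H (X × Y) = mark H X * mark H Y := by
  have mem_iff (z : X × Y) :
      z ∈ fixedPoints H (X × Y) ↔ z.1 ∈ fixedPoints H X ∧ z.2 ∈ fixedPoints H Y := by
    simp only [mem_fixedPoints, Prod.ext_iff, forall_and]
    rfl
  rw [mark, mark, mark, ← Nat.card_prod]
  exact Nat.card_congr ((Equiv.subtypeEquivRight mem_iff).trans Equiv.subtypeProdEquivProd)

theorem mark_sigma_punit (ι : Type*) (H : Subgroup G) :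
    mark H (Σ _ : ι, PUnit.{u + 1}) = Nat.card ι :=
  Nat.card_congr <| (Equiv.subtypeUnivEquiv fun _ _ => rfl).trans (Equiv.sigmaPUnit ι)

end Marks

section Burnside

variable {G : Type*} [Group G] {X Y : Type*} [MulAction G X] [MulAction G Y]

/-- The orbit of `x` as an invariant subset, so that it has a complementary `SubMulAction`. -/
def orbitSubMulAction (G : Type*) [Monoid G] {X : Type*} [MulAction G X] (x : X) :
    SubMulAction G X where
  carrier := orbit G x
  smul_mem' g _ h := mem_orbit_of_mem_orbit g h

theorem equivariantlyEquivalent_quotient_stabilizer (x : X) :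
    EquivariantlyEquivalent G (G ⧸ stabilizer G x) (orbitSubMulAction G x) :=
  ⟨(orbitEquivQuotientStabilizer G x).symm,
    fun g q => Subtype.ext (ofQuotientStabilizer_smul G x g q)⟩

theorem equivariantlyEquivalent_orbit_of_stabilizer_eq {x : X} {y : Y}
    (h : stabilizer G x = stabilizer G y) :
    EquivariantlyEquivalent G (orbitSubMulAction G x) (orbitSubMulAction G y) := by
  have quotient_equiv_orbit := equivariantlyEquivalent_quotient_stabilizer (G := G) x
  rw [h] at quotient_equiv_orbit
  exact quotient_equiv_orbit.symm.trans (equivariantlyEquivalent_quotient_stabilizer y)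

theorem equivariantlyEquivalent_sum_compl (S : SubMulAction G X) :
    EquivariantlyEquivalent G (S ⊕ (Sᶜ : SubMulAction G X)) X := by
  classical
  refine ⟨Equiv.sumCompl (· ∈ S), ?_⟩
  rintro g (x | x) <;> rfl

theorem mark_eq_mark_add_mark_compl [Finite X] (S : SubMulAction G X) (H : Subgroup G) :
    mark H X = mark H S + mark H (Sᶜ : SubMulAction G X) := by
  rw [← (equivariantlyEquivalent_sum_compl S).mark_eq, mark_sum]

theorem exists_stabilizer_le_of_mark_eq [Finite X] [Finite Y]
    (h : ∀ H : Subgroup G, mark H X = mark H Y) (x : X) :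
    ∃ y : Y, stabilizer G x ≤ stabilizer G y := by
  rw [← mark_pos_iff, ← h, mark_pos_iff]
  exact ⟨x, le_rfl⟩

theorem exists_stabilizer_eq_of_mark_eq [Finite X] [Finite Y] [Nonempty X]
    (h : ∀ H : Subgroup G, mark H X = mark H Y) :
    ∃ (x : X) (y : Y), stabilizer G x = stabilizer G y := by
  obtain ⟨x, -, x_max⟩ :=
    Set.finite_univ.exists_maximalFor (stabilizer G : X → Subgroup G) _ Set.univ_nonempty
  obtain ⟨y, x_le_y⟩ := exists_stabilizer_le_of_mark_eq h x
  obtain ⟨x', y_le_x'⟩ := exists_stabilizer_le_of_mark_eq (fun H => (h H).symm) y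
  exact ⟨x, y, x_le_y.antisymm (y_le_x'.trans (x_max trivial (x_le_y.trans y_le_x')))⟩

theorem equivariantlyEquivalent_of_mark_eq [Finite X] [Finite Y]
    (h : ∀ H : Subgroup G, mark H X = mark H Y) : EquivariantlyEquivalent G X Y := by
  induction hn : Nat.card X using Nat.strong_induction_on generalizing X Y with
  | _ n ih =>
  subst hn
  cases isEmpty_or_nonempty X with
  | inl X_empty =>
    have Y_empty : IsEmpty Y := ⟨fun y =>
      X_empty.elim (exists_stabilizer_le_of_mark_eq (fun H => (h H).symm) y).choose⟩
    exact ⟨Equiv.equivOfIsEmpty X Y, fun _ => X_empty.elim⟩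
  | inr X_nonempty =>
    obtain ⟨x, y, stabilizer_eq⟩ := exists_stabilizer_eq_of_mark_eq h
    let S := orbitSubMulAction G x
    let T := orbitSubMulAction G y
    have orbit_equiv : EquivariantlyEquivalent G S T :=
      equivariantlyEquivalent_orbit_of_stabilizer_eq stabilizer_eq
    have compl_mark_eq (H : Subgroup G) :
        mark H (Sᶜ : SubMulAction G X) = mark H (Tᶜ : SubMulAction G Y) := by
      have mark_X := mark_eq_mark_add_mark_compl S H
      rw [h, mark_eq_mark_add_mark_compl T, orbit_equiv.mark_eq] at mark_X
      exact (Nat.add_left_cancel mark_X).symm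
    have compl_card_lt : Nat.card (Sᶜ : SubMulAction G X) < Nat.card X :=
      Finite.card_subtype_lt (x := x) fun hx => hx (mem_orbit_self x)
    have compl_equiv := ih _ compl_card_lt compl_mark_eq rfl
    exact (equivariantlyEquivalent_sum_compl S).symm.trans <|
      (orbit_equiv.sumCongr compl_equiv).trans (equivariantlyEquivalent_sum_compl T)

theorem LinearlyEquivalent.equivariantlyEquivalent [IsCyclic G] [Finite X] [Finite Y]
    (h : LinearlyEquivalent G X Y) : EquivariantlyEquivalent G X Y := by
  refine equivariantlyEquivalent_of_mark_eq fun H => ?_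
  obtain ⟨g, rfl⟩ := H.isCyclic_iff_exists_zpowers_eq_top.1 inferInstance
  rw [mark_zpowers, mark_zpowers, h g]

end Burnside

section Converse

open Polynomial

variable {G : Type u} [Group G]

theorem exists_mark_sub_mark_eq_eval (T : Type v) [Finite T] [MulAction G T] (p : ℤ[X]) :
    ∃ (A B : Type v) (_ : Finite A) (_ : Finite B) (_ : MulAction G A) (_ : MulAction G B),
      ∀ H : Subgroup G, (mark H A - mark H B : ℤ) = p.eval (mark H T : ℤ) := by
  induction p using Polynomial.induction_on with
  | C a =>
    refine ⟨Σ _ : Fin a.toNat, PUnit, Σ _ : Fin (-a).toNat, PUnit, inferInstance, inferInstance,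
      inferInstance, inferInstance, fun H => ?_⟩
    rw [mark_sigma_punit, mark_sigma_punit, Nat.card_fin, Nat.card_fin, eval_C,
      Int.toNat_sub_toNat_neg]
  | add p q hp hq =>
    obtain ⟨A, B, _, _, _, _, hAB⟩ := hp
    obtain ⟨A', B', _, _, _, _, hAB'⟩ := hq
    refine ⟨A ⊕ A', B ⊕ B', inferInstance, inferInstance, inferInstance, inferInstance,
      fun H => ?_⟩
    rw [mark_sum, mark_sum, eval_add, ← hAB, ← hAB']
    push_cast
    ring
  | monomial n a h =>
    obtain ⟨A, B, _, _, _, _, hAB⟩ := h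
    refine ⟨A × T, B × T, inferInstance, inferInstance, inferInstance, inferInstance,
      fun H => ?_⟩
    rw [mark_prod, mark_prod, pow_succ, ← mul_assoc, eval_mul_X, ← hAB]
    push_cast
    ring

theorem eval_prod_X_sub_natCast_eq_zero_iff {n k : ℕ} :
    (∏ i ∈ Finset.Icc 1 n, (X - C (i : ℤ))).eval (k : ℤ) = 0 ↔ k ∈ Finset.Icc 1 n := by
  simp [eval_prod, Finset.prod_eq_zero_iff, sub_eq_zero]

theorem exists_stabilizer_eq_top_of_linearlyEquivalent_imp
    (h : ∀ (A B : Type v) [Finite A] [Finite B] [MulAction G A] [MulAction G B],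
      LinearlyEquivalent G A B → EquivariantlyEquivalent G A B)
    {T : Type v} [Finite T] [MulAction G T] (hT : ∀ g : G, (fixedBy T g).Nonempty) :
    ∃ t : T, stabilizer G t = ⊤ := by
  let p : ℤ[X] := ∏ i ∈ Finset.Icc 1 (Nat.card T), (X - C (i : ℤ))
  have eval_eq_zero_iff (H : Subgroup G) : p.eval (mark H T : ℤ) = 0 ↔ 0 < mark H T := by
    rw [eval_prod_X_sub_natCast_eq_zero_iff, Finset.mem_Icc, and_iff_left (mark_le_card T H),
      Nat.succ_le_iff]
  obtain ⟨A, B, _, _, _, _, mark_sub_eq⟩ := exists_mark_sub_mark_eq_eval (G := G) T p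
  have linearlyEquivalent : LinearlyEquivalent G A B := by
    intro g
    obtain ⟨t, ht⟩ := hT g
    have mark_pos : 0 < mark (Subgroup.zpowers g) T :=
      (mark_pos_iff T).2 ⟨t, Subgroup.zpowers_le.2 ht⟩
    have mark_sub_eq_zero := (mark_sub_eq _).trans ((eval_eq_zero_iff _).2 mark_pos)
    rw [← mark_zpowers, ← mark_zpowers]
    exact_mod_cast sub_eq_zero.1 mark_sub_eq_zero
  have mark_top_pos : 0 < mark (⊤ : Subgroup G) T := by
    rw [← eval_eq_zero_iff, ← mark_sub_eq, (h A B linearlyEquivalent).mark_eq, sub_self]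
  obtain ⟨t, ht⟩ := (mark_pos_iff T).1 mark_top_pos
  exact ⟨t, top_le_iff.1 ht⟩

theorem eq_top_of_stabilizer_quotient_eq_top {H : Subgroup G} {q : G ⧸ H}
    (h : stabilizer G q = ⊤) : H = ⊤ := by
  have eq_q (r : G ⧸ H) : r = q := by
    obtain ⟨g, rfl⟩ := exists_smul_eq G q r
    exact mem_stabilizer_iff.1 (h ▸ Subgroup.mem_top g)
  exact QuotientGroup.subgroup_eq_top_of_subsingleton H ⟨fun r s => (eq_q r).trans (eq_q s).symm⟩

theorem stabilizer_sigma_mk {ι : Type*} {X : ι → Type*} [∀ i, MulAction G (X i)] (i : ι)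
    (x : X i) : stabilizer G (⟨i, x⟩ : Σ i, X i) = stabilizer G x := by
  ext g
  exact sigma_mk_injective.eq_iff (b := x)

theorem isCyclic_of_linearlyEquivalent_imp [Finite G]
    (h : ∀ (A B : Type u) [Finite A] [Finite B] [MulAction G A] [MulAction G B],
      LinearlyEquivalent G A B → EquivariantlyEquivalent G A B) : IsCyclic G := by
  have fixedBy_nonempty (g : G) : (fixedBy (Σ k : G, G ⧸ Subgroup.zpowers k) g).Nonempty := by
    refine ⟨⟨g, (1 : G)⟩, mem_stabilizer_iff.1 ?_⟩
    rw [stabilizer_sigma_mk, stabilizer_quotient]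
    exact Subgroup.mem_zpowers g
  obtain ⟨⟨g, q⟩, stabilizer_eq_top⟩ :=
    exists_stabilizer_eq_top_of_linearlyEquivalent_imp h fixedBy_nonempty
  rw [stabilizer_sigma_mk] at stabilizer_eq_top
  exact isCyclic_iff_exists_zpowers_eq_top.2
    ⟨g, eq_top_of_stabilizer_quotient_eq_top stabilizer_eq_top⟩

end Converse

/-- A finite group `G` is cyclic iff any two linearly equivalent finite `G`-sets
(same number of fixed points for every `g : G`) are isomorphic as `G`-sets
(there is a `G`-equivariant bijection between them). -/
theorem cyclic_iff_linEquiv_imp_iso (G : Type) [Group G] [Fintype G] :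
    IsCyclic G ↔
      ∀ (X Y : Type) [Fintype X] [Fintype Y] [MulAction G X] [MulAction G Y],
        (∀ g : G, Nat.card (fixedBy X g) = Nat.card (fixedBy Y g)) →
        ∃ e : X ≃ Y, ∀ (g : G) (x : X), e (g • x) = g • e x := by
  constructor
  · intro _ X Y _ _ _ _ h
    exact LinearlyEquivalent.equivariantlyEquivalent h
  · intro h
    refine isCyclic_of_linearlyEquivalent_imp fun A B _ _ _ _ hAB => ?_
    have := Fintype.ofFinite A
    have := Fintype.ofFinite B
    exact h A B hAB
end

section
/- Let G be a finite group, H a subgroup of G, and let X and Y be finite H-sets such that for every h ∈ H the number of fixed points of h on X equals the number of fixed points of h on Y. Then for every g ∈ G, the number of fixed points of g on the induced G-set G ×_H X equals the number of fixed points of g on the induced G-set G ×_H Y. That is, linear equivalence of H-sets is preserved by induction to G. -/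
open MulAction

/-- The setoid on `G × X` whose classes are the orbits of the `H`-action
`h • (g, x) = (g * h⁻¹, h • x)`, where `H ≤ G` and `X` is an `H`-set.  Its quotient is the
induced `G`-set `G ×_H X`. -/
def indSetoid (G : Type) [Group G] (H : Subgroup G) (X : Type) [MulAction H X] :
    Setoid (G × X) where
  r p q := ∃ h : H, q = (p.1 * (h : G)⁻¹, h • p.2)
  iseqv := by
    constructor
    · intro p
      exact ⟨1, by simp⟩
    · rintro p q ⟨h, rfl⟩
      exact ⟨h⁻¹, by simp [mul_assoc, mul_smul]⟩
    · rintro p q r ⟨h₁, rfl⟩ ⟨h₂, rfl⟩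
      exact ⟨h₂ * h₁, by simp [mul_assoc, mul_smul]⟩

/-- The induced `G`-set `G ×_H X`: the quotient of `G × X` by the `H`-action
`h • (g, x) = (g * h⁻¹, h • x)`. -/
def IndGSet (G : Type) [Group G] (H : Subgroup G) (X : Type) [MulAction H X] : Type :=
  Quotient (indSetoid G H X)

/-- `G` acts on the induced `G`-set `G ×_H X` by `g' • ⟦(g, x)⟧ = ⟦(g' * g, x)⟧`. -/
instance IndGSet.mulAction (G : Type) [Group G] (H : Subgroup G) (X : Type) [MulAction H X] :
    MulAction G (IndGSet G H X) where
  smul g' := Quotient.lift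
    (fun p => Quotient.mk (indSetoid G H X) (g' * p.1, p.2))
    (by
      rintro p q ⟨h, rfl⟩
      exact Quotient.sound ⟨h, by simp [mul_assoc]⟩)
  one_smul := by
    refine Quotient.ind (fun p => ?_)
    exact Quotient.sound ⟨1, by simp⟩
  mul_smul g₁ g₂ := by
    refine Quotient.ind (fun p => ?_)
    exact Quotient.sound ⟨1, by simp [mul_assoc]⟩

/-!
A point of `G ×_H X` is uniquely `⟦(t, x)⟧` with `t` running over a set of coset representatives,
and `g` fixes `⟦(t, x)⟧` if and only if `t⁻¹ * g * t` lies in `H` and fixes `x`. The number of fixed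
points of `g` is therefore the sum, over the cosets `t H` fixed by `g`, of the number of fixed
points of `t⁻¹ * g * t ∈ H` on `X`, which depends on `X` only through its fixed-point counts.
-/

section FixedCosets

variable {G : Type*} [Group G] {H : Subgroup G}

theorem mk_mem_fixedBy_quotient_iff (g t : G) :
    (t : G ⧸ H) ∈ fixedBy (G ⧸ H) g ↔ t⁻¹ * g * t ∈ H := by
  rw [mem_fixedBy, eq_comm, MulAction.Quotient.smul_coe, QuotientGroup.eq, smul_eq_mul, mul_assoc]

/-- For a coset `t H` fixed by `g`, with `t` its representative `Quotient.out`, the element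
`t⁻¹ * g * t` of `H`, through which `g` acts on the fibre of `G ×_H X` over `t H`. -/
noncomputable def conjOut (g : G) (c : fixedBy (G ⧸ H) g) : H :=
  ⟨c.1.out⁻¹ * g * c.1.out,
    (mk_mem_fixedBy_quotient_iff g c.1.out).1 ((QuotientGroup.out_eq' c.1).symm ▸ c.2)⟩

end FixedCosets

namespace IndGSet

variable {G : Type} [Group G] {H : Subgroup G} {X : Type} [MulAction H X]

variable (H) in
/-- The class `⟦(t, x)⟧` in the induced `G`-set `G ×_H X`. -/
def mk (t : G) (x : X) : IndGSet G H X :=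
  Quotient.mk (indSetoid G H X) (t, x)

theorem exists_mk_eq (z : IndGSet G H X) : ∃ t x, mk H t x = z :=
  Quotient.inductionOn z fun p => ⟨p.1, p.2, rfl⟩

theorem smul_mk (g t : G) (x : X) : g • mk H t x = mk H (g * t) x := rfl

theorem mk_eq_mk_iff {s t : G} {x y : X} :
    mk H s x = mk H t y ↔ ∃ k : H, s = t * k ∧ k • x = y := by
  refine Quotient.eq.trans (exists_congr fun k => ?_)
  rw [Prod.mk.injEq, eq_mul_inv_iff_mul_eq, eq_comm (a := t * (k : G)), eq_comm (a := y)]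

theorem mk_mul_coe (t : G) (k : H) (x : X) : mk H (t * k) x = mk H t (k • x) :=
  mk_eq_mk_iff.2 ⟨k, rfl, rfl⟩

theorem mk_mem_fixedBy_iff (g t : G) (x : X) :
    mk H t x ∈ fixedBy (IndGSet G H X) g ↔ ∃ k : H, (k : G) = t⁻¹ * g * t ∧ x ∈ fixedBy X k := by
  rw [mem_fixedBy, smul_mk, mk_eq_mk_iff]
  refine exists_congr fun k => and_congr_left fun _ => ?_
  rw [mul_assoc, eq_inv_mul_iff_mul_eq, eq_comm]

theorem mk_out_mem_fixedBy_iff (g : G) (c : G ⧸ H) (x : X) :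
    mk H c.out x ∈ fixedBy (IndGSet G H X) g ↔
      ∃ hc : c ∈ fixedBy (G ⧸ H) g, x ∈ fixedBy X (conjOut g ⟨c, hc⟩) := by
  rw [mk_mem_fixedBy_iff]
  constructor
  · rintro ⟨k, hk, hx⟩
    have hc : c ∈ fixedBy (G ⧸ H) g := by
      rw [← QuotientGroup.out_eq' c, mk_mem_fixedBy_quotient_iff, ← hk]
      exact k.2
    have k_eq : k = conjOut g ⟨c, hc⟩ := Subtype.ext hk
    exact ⟨hc, k_eq ▸ hx⟩
  · rintro ⟨hc, hx⟩
    exact ⟨conjOut g ⟨c, hc⟩, rfl, hx⟩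

theorem mk_out_injective :
    Function.Injective fun p : (G ⧸ H) × X => mk H p.1.out p.2 := by
  rintro ⟨c, x⟩ ⟨d, y⟩ hxy
  obtain ⟨k, hk, rfl⟩ := mk_eq_mk_iff.1 hxy
  obtain rfl : c = d := by
    rw [← QuotientGroup.out_eq' c, ← QuotientGroup.out_eq' d, hk, QuotientGroup.mk_mul_of_mem _ k.2]
  obtain rfl : k = 1 := Subtype.ext (left_eq_mul.1 hk)
  rw [one_smul]

theorem mk_out_surjective :
    Function.Surjective fun p : (G ⧸ H) × X => mk H p.1.out p.2 := by
  intro z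
  obtain ⟨t, x, rfl⟩ := exists_mk_eq z
  obtain ⟨k, hk⟩ := QuotientGroup.mk_out_eq_mul H t
  refine ⟨(t, k⁻¹ • x), ?_⟩
  simp only [hk, mk_mul_coe, smul_inv_smul]

variable (X) in
/-- The decomposition of the fixed points of `g` on `G ×_H X` according to the coset they lie
over; it sends `(c, x)` to `⟦(c.out, x)⟧`. -/
noncomputable def sigmaEquivFixedBy (g : G) :
    (Σ c : fixedBy (G ⧸ H) g, fixedBy X (conjOut g c)) ≃ fixedBy (IndGSet G H X) g :=
  Equiv.ofBijective
    (fun p => ⟨mk H p.1.1.out p.2, (mk_out_mem_fixedBy_iff g _ _).2 ⟨p.1.2, p.2.2⟩⟩) <| by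
    constructor
    · rintro ⟨⟨c, hc⟩, x, hx⟩ ⟨⟨d, hd⟩, y, hy⟩ hxy
      obtain ⟨rfl, rfl⟩ :=
        Prod.mk.inj (mk_out_injective (a₁ := (c, x)) (a₂ := (d, y)) (congrArg Subtype.val hxy))
      rfl
    · rintro ⟨z, hz⟩
      obtain ⟨⟨c, x⟩, rfl⟩ := mk_out_surjective z
      obtain ⟨hc, hx⟩ := (mk_out_mem_fixedBy_iff g c x).1 hz
      exact ⟨⟨⟨c, hc⟩, x, hx⟩, rfl⟩

theorem cardinalMk_fixedBy (g : G) :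
    Cardinal.mk (fixedBy (IndGSet G H X) g) =
      Cardinal.sum fun c : fixedBy (G ⧸ H) g => Cardinal.mk (fixedBy X (conjOut g c)) := by
  rw [← Cardinal.mk_sigma, Cardinal.mk_congr (sigmaEquivFixedBy X g)]

end IndGSet

theorem linEquiv_of_induced_general {G : Type} [Group G] {H : Subgroup G} {X Y : Type}
    [MulAction H X] [MulAction H Y]
    (h : ∀ k : H, Cardinal.mk (fixedBy X k) = Cardinal.mk (fixedBy Y k)) (g : G) :
    Cardinal.mk (fixedBy (IndGSet G H X) g) = Cardinal.mk (fixedBy (IndGSet G H Y) g) := by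
  simp only [IndGSet.cardinalMk_fixedBy, h]

/-- Linear equivalence of `H`-sets is preserved by induction to `G`: if every `h ∈ H` has
the same number of fixed points on the `H`-sets `X` and `Y`, then every `g ∈ G` has the
same number of fixed points on the induced `G`-sets `G ×_H X` and `G ×_H Y`. -/
theorem linEquiv_of_induced
    (G : Type) [Group G] [Fintype G] (H : Subgroup G) (X Y : Type)
    [Fintype X] [Fintype Y] [MulAction H X] [MulAction H Y]
    (h : ∀ h : H, Nat.card (fixedBy X h) = Nat.card (fixedBy Y h)) :
    ∀ g : G, Nat.card (fixedBy (IndGSet G H X) g) = Nat.card (fixedBy (IndGSet G H Y) g) := by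
  have cardinalMk_eq (k : H) : Cardinal.mk (fixedBy X k) = Cardinal.mk (fixedBy Y k) :=
    Cardinal.eq.2 (Finite.card_eq.1 (h k))
  exact fun g => congrArg Cardinal.toNat (linEquiv_of_induced_general cardinalMk_eq g)
end

section
/- Let G and H be finite groups and suppose H is involved in G, i.e. there exist subgroups L ⊴ K ≤ G with K/L isomorphic to H. If H admits an unbalanced pair of H-sets, then G admits an unbalanced pair of G-sets. -/
open MulAction

/-!
Let `L ⊴ K ≤ G` with `K ⧸ L ≃* H`. Inflate an `H`-set along `K → H`, then induce the resulting
`K`-set `X` to `G`. Inflation changes neither the orbits nor, up to reindexing, the fixed point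
counts. For induction, choose representatives `r c` of the cosets `c ∈ G ⧸ K` and write
`G ×_K X` as `(G ⧸ K) × X`, on which `g • (c, x) = (g • c, k • x)` with `k = (r (g • c))⁻¹ g (r c)`.
The fixed points of `g` then fibre over the cosets `c` fixed by `g`, the fibre over `c` being the
fixed points on `X` of an element of `K` that does not depend on `X`; so linear equivalence is
preserved. The orbits of `G` are the sets `(G ⧸ K) × o` for `o` an orbit of `K`, so all orbit sizes
are multiplied by the index of `K`, and a discrepancy in size `n` becomes one in size
`[G : K] * n`.
-/

section Inflation

section Monoid

variable {M N α : Type*} [Monoid M] [Monoid N] [MulAction M α] [MulAction N α] {f : M → N}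

theorem fixedBy_apply_eq (hα : ∀ (m : M) (a : α), f m • a = m • a) (m : M) :
    fixedBy α (f m) = fixedBy α m := by
  ext a
  simp only [mem_fixedBy, hα]

theorem orbit_eq_orbit_of_surjective (hf : Function.Surjective f)
    (hα : ∀ (m : M) (a : α), f m • a = m • a) (a : α) : orbit M a = orbit N a := by
  ext b
  simp only [mem_orbit_iff, hf.exists, hα]

end Monoid

variable {K H X : Type} [Group K] [Group H] [MulAction K X] [MulAction H X] {f : K → H}

theorem orbitCountOfSize_eq_of_surjective (hf : Function.Surjective f)
    (hX : ∀ (k : K) (x : X), f k • x = k • x) (n : ℕ) :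
    orbitCountOfSize K X n = orbitCountOfSize H X n := by
  have orbit_eq := orbit_eq_orbit_of_surjective hf hX
  let e : orbitRel.Quotient K X ≃ orbitRel.Quotient H X :=
    Quotient.congrRight fun x y => by
      change x ∈ orbit K y ↔ x ∈ orbit H y
      rw [orbit_eq]
  refine Nat.card_congr (e.subtypeEquiv fun o => ?_)
  induction o using Quotient.inductionOn with
  | h x =>
    change Nat.card (orbit K x) = n ↔ Nat.card (orbit H x) = n
    rw [orbit_eq]

theorem IsUnbalancedPair.inflate {Y : Type} [MulAction K Y] [MulAction H Y]
    (hXY : IsUnbalancedPair H X Y) (hf : Function.Surjective f)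
    (hX : ∀ (k : K) (x : X), f k • x = k • x) (hY : ∀ (k : K) (y : Y), f k • y = k • y) :
    IsUnbalancedPair K X Y := by
  obtain ⟨hlin, n, hn⟩ := hXY
  refine ⟨fun k => ?_, n, ?_⟩
  · rw [← fixedBy_apply_eq hX, ← fixedBy_apply_eq hY]
    exact hlin (f k)
  · rwa [orbitCountOfSize_eq_of_surjective hf hX, orbitCountOfSize_eq_of_surjective hf hY]

end Inflation

section CosetCocycle

variable {G : Type*} [Group G] {K : Subgroup G}

/-- The `K`-valued cocycle `(g, c) ↦ (r (g • c))⁻¹ * g * r c` on `G ⧸ K`, where the choice of coset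
representatives `r` is `Quotient.out`. It measures the failure of `r` to be `G`-equivariant, and
describes the action of `G` on an induced `G`-set. -/
noncomputable def cosetCocycle (K : Subgroup G) (g : G) (c : G ⧸ K) : K :=
  ⟨(g • c).out⁻¹ * (g * c.out), by
    rw [← QuotientGroup.eq, QuotientGroup.out_eq', ← smul_eq_mul, Quotient.mk_smul_out]⟩

theorem cosetCocycle_one (c : G ⧸ K) : cosetCocycle K 1 c = 1 := by
  ext
  simp [cosetCocycle]

theorem cosetCocycle_mul (g h : G) (c : G ⧸ K) :
    cosetCocycle K (g * h) c = cosetCocycle K g (h • c) * cosetCocycle K h c := by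
  ext
  simp [cosetCocycle, mul_smul, mul_assoc]

theorem exists_smul_eq_and_cosetCocycle_eq (c d : G ⧸ K) (k : K) :
    ∃ g : G, g • c = d ∧ cosetCocycle K g c = k := by
  have smul_eq : (d.out * k * c.out⁻¹) • c = d := by
    rw [← Quotient.mk_smul_out, smul_eq_mul, inv_mul_cancel_right,
      QuotientGroup.mk_mul_of_mem _ k.2, QuotientGroup.out_eq']
  refine ⟨d.out * k * c.out⁻¹, smul_eq, ?_⟩
  ext
  simp [cosetCocycle, smul_eq]

end CosetCocycle

/-- The `G`-set `G ×_K X` induced from a `K`-set `X`, realised on the pairs `(c, x)` of a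
coset and a point: such a pair stands for the class of `(c.out, x)`. -/
@[ext]
structure InducedSet {G : Type*} [Group G] (K : Subgroup G) (X : Type*) where
  coset : G ⧸ K
  point : X

namespace InducedSet

variable {G : Type*} [Group G] {K : Subgroup G} {X : Type*}

instance [K.FiniteIndex] [Finite X] : Finite (InducedSet K X) :=
  Finite.of_injective (fun p => (p.coset, p.point)) fun _ _ h =>
    InducedSet.ext (congrArg Prod.fst h) (congrArg Prod.snd h)

variable [MulAction K X]

noncomputable instance : MulAction G (InducedSet K X) where
  smul g p := ⟨g • p.coset, cosetCocycle K g p.coset • p.point⟩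
  one_smul p := InducedSet.ext (one_smul G p.coset) <| by
    change cosetCocycle K 1 p.coset • p.point = p.point
    rw [cosetCocycle_one, one_smul]
  mul_smul g h p := InducedSet.ext (mul_smul g h p.coset) <| by
    change cosetCocycle K (g * h) p.coset • p.point =
      cosetCocycle K g (h • p.coset) • cosetCocycle K h p.coset • p.point
    rw [cosetCocycle_mul, mul_smul]

/-- The fixed points of `g` on an induced `G`-set, fibred over the cosets fixed by `g`. -/
def fixedByEquivSigma (g : G) :
    fixedBy (InducedSet K X) g ≃ Σ c : fixedBy (G ⧸ K) g, fixedBy X (cosetCocycle K g c) where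
  toFun p := ⟨⟨p.1.coset, congrArg coset p.2⟩, ⟨p.1.point, congrArg point p.2⟩⟩
  invFun q := ⟨⟨q.1, q.2⟩, InducedSet.ext q.1.2 q.2.2⟩

theorem mem_orbit_iff {p q : InducedSet K X} : p ∈ orbit G q ↔ p.point ∈ orbit K q.point := by
  constructor
  · rintro ⟨g, rfl⟩
    exact mem_orbit q.point (cosetCocycle K g q.coset)
  · rintro ⟨k, hk⟩
    obtain ⟨g, hg, rfl⟩ := exists_smul_eq_and_cosetCocycle_eq q.coset p.coset k
    exact ⟨g, InducedSet.ext hg hk⟩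

/-- The `G`-orbit of `(c, x)` is the product of `G ⧸ K` with the `K`-orbit of `x`. -/
def orbitEquivProd (p : InducedSet K X) : orbit G p ≃ (G ⧸ K) × orbit K p.point where
  toFun q := (q.1.coset, ⟨q.1.point, mem_orbit_iff.1 q.2⟩)
  invFun q := ⟨⟨q.1, q.2⟩, mem_orbit_iff.2 q.2.2⟩

theorem card_orbit (p : InducedSet K X) :
    Nat.card (orbit G p) = K.index * Nat.card (orbit K p.point) := by
  rw [Nat.card_congr p.orbitEquivProd, Nat.card_prod, Subgroup.index]

/-- The bijection between the `G`-orbits of the induced set of `X` and the `K`-orbits of `X`. -/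
noncomputable def orbitQuotientEquiv :
    orbitRel.Quotient G (InducedSet K X) ≃ orbitRel.Quotient K X where
  toFun := Quotient.map point fun _ _ => mem_orbit_iff.1
  invFun := Quotient.map (fun x => ⟨(1 : G), x⟩) fun _ _ h => mem_orbit_iff.2 h
  left_inv := Quotient.ind fun p => Quotient.sound (mem_orbit_iff.2 (mem_orbit_self p.point))
  right_inv := Quotient.ind fun _ => rfl

end InducedSet

section Induction

variable {G : Type} [Group G] {K : Subgroup G} [K.FiniteIndex]
  {X Y : Type} [MulAction K X] [MulAction K Y]

theorem orbitCountOfSize_inducedSet (n : ℕ) :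
    orbitCountOfSize G (InducedSet K X) (K.index * n) = orbitCountOfSize K X n := by
  refine Nat.card_congr (InducedSet.orbitQuotientEquiv.subtypeEquiv fun o => ?_)
  induction o using Quotient.inductionOn with
  | h p =>
    change Nat.card (orbit G p) = K.index * n ↔ Nat.card (orbit K p.point) = n
    rw [InducedSet.card_orbit, Nat.mul_right_inj Subgroup.FiniteIndex.index_ne_zero]

variable [Finite X] [Finite Y]

theorem IsLinEquiv.induce (hXY : IsLinEquiv K X Y) :
    IsLinEquiv G (InducedSet K X) (InducedSet K Y) := by
  intro g
  have := Fintype.ofFinite (fixedBy (G ⧸ K) g)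
  calc Nat.card (fixedBy (InducedSet K X) g)
      = ∑ c : fixedBy (G ⧸ K) g, Nat.card (fixedBy X (cosetCocycle K g c)) := by
        rw [Nat.card_congr (InducedSet.fixedByEquivSigma g), Nat.card_sigma]
    _ = ∑ c : fixedBy (G ⧸ K) g, Nat.card (fixedBy Y (cosetCocycle K g c)) :=
        Finset.sum_congr rfl fun c _ => hXY (cosetCocycle K g c)
    _ = Nat.card (fixedBy (InducedSet K Y) g) := by
        rw [Nat.card_congr (InducedSet.fixedByEquivSigma g), Nat.card_sigma]

theorem IsUnbalancedPair.induce (hXY : IsUnbalancedPair K X Y) :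
    IsUnbalancedPair G (InducedSet K X) (InducedSet K Y) := by
  obtain ⟨hlin, n, hn⟩ := hXY
  refine ⟨hlin.induce, K.index * n, ?_⟩
  rwa [orbitCountOfSize_inducedSet, orbitCountOfSize_inducedSet]

end Induction

theorem unbalanced_pair_of_involved_general
    (G H : Type) [Group G] [Group H]
    (K : Subgroup G) [K.FiniteIndex] (L : Subgroup K) [L.Normal] (φ : (K ⧸ L) ≃* H)
    (hH : ∃ (X Y : Type) (_ : Fintype X) (_ : Fintype Y)
        (ix : MulAction H X) (iy : MulAction H Y), @IsUnbalancedPair H _ X Y ix iy) :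
    ∃ (X Y : Type) (_ : Fintype X) (_ : Fintype Y)
      (ix : MulAction G X) (iy : MulAction G Y), @IsUnbalancedPair G _ X Y ix iy := by
  obtain ⟨X, Y, _, _, _, _, hXY⟩ := hH
  let f : K →* H := φ.toMonoidHom.comp (QuotientGroup.mk' L)
  have hf : Function.Surjective f := φ.surjective.comp (QuotientGroup.mk'_surjective L)
  let _ : MulAction K X := MulAction.compHom X f
  let _ : MulAction K Y := MulAction.compHom Y f
  have inflated : IsUnbalancedPair K X Y := hXY.inflate hf (fun _ _ => rfl) (fun _ _ => rfl)
  exact ⟨InducedSet K X, InducedSet K Y, Fintype.ofFinite _, Fintype.ofFinite _,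
    inferInstance, inferInstance, inflated.induce⟩

/-- If a finite group `H` is involved in a finite group `G` (i.e. `H ≅ K ⧸ L` for some
subgroups `L ⊴ K ≤ G`) and `H` admits an unbalanced pair of `H`-sets, then `G` admits an
unbalanced pair of `G`-sets. -/
theorem unbalanced_pair_of_involved
    (G H : Type) [Group G] [Group H] [Fintype G] [Fintype H]
    (K : Subgroup G) (L : Subgroup K) [L.Normal] (φ : (K ⧸ L) ≃* H)
    (hH : ∃ (X Y : Type) (_ : Fintype X) (_ : Fintype Y)
        (ix : MulAction H X) (iy : MulAction H Y), @IsUnbalancedPair H _ X Y ix iy) :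
    ∃ (X Y : Type) (_ : Fintype X) (_ : Fintype Y)
      (ix : MulAction G X) (iy : MulAction G Y), @IsUnbalancedPair G _ X Y ix iy :=
  unbalanced_pair_of_involved_general G H K L φ hH
end

section
/- Let p and q be primes and let G be a nonabelian group of order p·q. Then every non-identity element of G generates its own centralizer: for every g ∈ G with g ≠ 1, the centralizer C_G(g) equals the cyclic subgroup generated by g. -/
/-!
A subgroup `H` of prime index is maximal, so if `H` is commutative its centralizer, which contains
`H`, is either `H` or the whole group. In the latter case `H` is central, hence the quotient by the
center has order dividing a prime; it is therefore cyclic and the group is commutative.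
In a noncommutative group of order `p * q` this applies to `H = ⟨g⟩` for every `g ≠ 1`, because a
proper nontrivial subgroup has prime index.
-/

open Subgroup ArithmeticFunction
open scoped ArithmeticFunction.Omega

theorem prime_right_of_isSemiprime_mul {m n : ℕ} (h : (m * n).IsSemiprime)
    (hm : m ≠ 1) (hn : n ≠ 1) : n.Prime := by
  obtain ⟨hm₀, hn₀⟩ := mul_ne_zero_iff.mp h.1
  have hsum : Ω m + Ω n = 2 := by
    simpa only [cardFactors_mul hm₀ hn₀] using h.2
  have hm_pos : Ω m ≠ 0 := by
    simp [cardFactors_eq_zero_iff_eq_zero_or_one, hm₀, hm]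
  have hn_pos : Ω n ≠ 0 := by
    simp [cardFactors_eq_zero_iff_eq_zero_or_one, hn₀, hn]
  rw [← cardFactors_eq_one_iff_prime]
  lia

section Group

variable {G : Type*} [Group G] {H : Subgroup G}

theorem index_prime_of_isSemiprime_card (hG : (Nat.card G).IsSemiprime)
    (hbot : H ≠ ⊥) (htop : H ≠ ⊤) : H.index.Prime := by
  rw [← H.card_mul_index] at hG
  exact prime_right_of_isSemiprime_mul hG (mt H.card_eq_one.mp hbot) (mt index_eq_one.mp htop)

theorem isCoatom_of_index_prime (hH : H.index.Prime) : IsCoatom H := by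
  refine ⟨fun htop ↦ hH.ne_one (index_eq_one.mpr htop), fun K hHK ↦ ?_⟩
  have hmul : (H.relIndex K * K.index).Prime := by rwa [relIndex_mul_index hHK.le]
  rcases Nat.prime_mul_iff.mp hmul with ⟨-, hindex⟩ | ⟨-, hrel⟩
  · exact index_eq_one.mp hindex
  · exact absurd (relIndex_eq_one.mp hrel) hHK.not_ge

theorem isMulCommutative_of_le_center_of_index_prime (hcenter : H ≤ center G)
    (hH : H.index.Prime) : IsMulCommutative G := by
  have : Fact H.index.Prime := ⟨hH⟩
  have : IsCyclic (G ⧸ center G) := isCyclic_of_card_dvd_prime (index_dvd_of_le hcenter)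
  exact isMulCommutative_of_isCyclic_quotient_center_self G

theorem centralizer_eq_self_of_index_prime [IsMulCommutative H] (hG : ¬ IsMulCommutative G)
    (hH : H.index.Prime) : centralizer (H : Set G) = H := by
  refine ((isCoatom_of_index_prime hH).le_iff.mp H.le_centralizer).resolve_left fun htop ↦ hG ?_
  exact isMulCommutative_of_le_center_of_index_prime (centralizer_eq_top_iff_subset.mp htop) hH

theorem index_zpowers_prime_of_isSemiprime_card (hcard : (Nat.card G).IsSemiprime)
    (hG : ¬ IsMulCommutative G) {g : G} (hg : g ≠ 1) : (zpowers g).index.Prime := by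
  refine index_prime_of_isSemiprime_card hcard (zpowers_ne_bot.mpr hg) fun htop ↦ hG ?_
  have : IsCyclic G := isCyclic_iff_exists_zpowers_eq_top.mpr ⟨g, htop⟩
  infer_instance

theorem centralizer_eq_zpowers_of_nonabelian_pq_general (hG : ¬ IsMulCommutative G) {g : G}
    (hg : (zpowers g).index.Prime) : centralizer {g} = zpowers g := by
  rw [← centralizer_closure, ← zpowers_eq_closure]
  exact centralizer_eq_self_of_index_prime hG hg

end Group

/-- In a nonabelian group of order `p * q` (`p`, `q` primes), every non-identity element
generates its own centralizer: `C_G(g) = ⟨g⟩`. -/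
theorem centralizer_eq_zpowers_of_nonabelian_pq
    (p q : ℕ) (hp : p.Prime) (hq : q.Prime)
    (G : Type) [Group G] [Fintype G] (hG : Fintype.card G = p * q)
    (hnab : ¬ ∀ a b : G, a * b = b * a) (g : G) (hg : g ≠ 1) :
    Subgroup.centralizer {g} = Subgroup.zpowers g := by
  have hncomm : ¬ IsMulCommutative G := fun _ ↦ hnab mul_comm'
  exact centralizer_eq_zpowers_of_nonabelian_pq_general hncomm <|
    index_zpowers_prime_of_isSemiprime_card
      (by simpa only [Nat.card_eq_fintype_card, hG] using hp.mul_isAlmostPrime_two hq) hncomm hg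
end

section
/- For every natural number k, the quadratic forms 4m²+n² (counted twice) and 2m²+2n² together represent k over the integers the same number of times as the forms m²+n² and 4m²+4n² (counted twice) together: 2·#{(m,n) ∈ ℤ² : 4m²+n² = k} + #{(m,n) ∈ ℤ² : 2m²+2n² = k} = #{(m,n) ∈ ℤ² : m²+n² = k} + 2·#{(m,n) ∈ ℤ² : 4m²+4n² = k}. -/
/-!
A pair `(x, y)` of integers has `x` even, `y` even or `x + y` even, and as soon as two of these hold
all three do. So inclusion–exclusion over the three sublattices of index two counts every point
outside `2ℤ × 2ℤ` once and every point inside it three times. The sublattices are the images of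
`(m, n) ↦ (2m, n)`, `(m, 2n)`, `(m + n, m - n)`, which pull `x² + y²` back to `4m² + n²`,
`m² + 4n²` and `2m² + 2n²`.
-/

open Function Set

theorem ncard_add_ncard_add_ncard_of_inter_eq {α : Type*} {A B C D : Set α} (hA : A.Finite)
    (hB : B.Finite) (hC : C.Finite) (hAB : A ∩ B = D) (hABC : (A ∪ B) ∩ C = D) :
    A.ncard + B.ncard + C.ncard = (A ∪ B ∪ C).ncard + 2 * D.ncard := by
  calc A.ncard + B.ncard + C.ncard
      = (A ∪ B).ncard + C.ncard + D.ncard := by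
        rw [← ncard_union_add_ncard_inter A B hA hB, hAB, add_right_comm]
    _ = (A ∪ B ∪ C).ncard + 2 * D.ncard := by
        rw [← ncard_union_add_ncard_inter (A ∪ B) C (hA.union hB) hC, hABC, two_mul, add_assoc]

theorem natCard_apply_mem_eq_ncard_inter {α β : Type*} {f : α → β} (hf : Injective f)
    {R : Set β} (hR : range f = R) (S : Set β) :
    Nat.card {a // f a ∈ S} = (S ∩ R).ncard := by
  rw [← hR, ← image_preimage_eq_inter_range, ncard_image_of_injective _ hf]
  exact Nat.card_coe_set_eq (f ⁻¹' S)

section ParitySublattices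

variable (S : Set (ℤ × ℤ))

theorem natCard_two_mul_fst_mem :
    Nat.card {p : ℤ × ℤ // (2 * p.1, p.2) ∈ S} = (S ∩ {q | Even q.1}).ncard := by
  apply natCard_apply_mem_eq_ncard_inter (f := fun p : ℤ × ℤ => (2 * p.1, p.2))
  · intro p q h
    grind
  · ext ⟨x, y⟩
    simp [even_iff_exists_two_mul, eq_comm]

theorem natCard_two_mul_snd_mem :
    Nat.card {p : ℤ × ℤ // (p.1, 2 * p.2) ∈ S} = (S ∩ {q | Even q.2}).ncard := by
  apply natCard_apply_mem_eq_ncard_inter (f := fun p : ℤ × ℤ => (p.1, 2 * p.2))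
  · intro p q h
    grind
  · ext ⟨x, y⟩
    simp [even_iff_exists_two_mul, eq_comm]

theorem natCard_two_mul_fst_two_mul_snd_mem :
    Nat.card {p : ℤ × ℤ // (2 * p.1, 2 * p.2) ∈ S} = (S ∩ {q | Even q.1 ∧ Even q.2}).ncard := by
  apply natCard_apply_mem_eq_ncard_inter (f := fun p : ℤ × ℤ => (2 * p.1, 2 * p.2))
  · intro p q h
    grind
  · ext ⟨x, y⟩
    simp [even_iff_exists_two_mul, eq_comm]

theorem natCard_add_sub_mem :
    Nat.card {p : ℤ × ℤ // (p.1 + p.2, p.1 - p.2) ∈ S} = (S ∩ {q | Even (q.1 + q.2)}).ncard := by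
  apply natCard_apply_mem_eq_ncard_inter (f := fun p : ℤ × ℤ => (p.1 + p.2, p.1 - p.2))
  · intro p q h
    grind
  · ext ⟨x, y⟩
    constructor
    · rintro ⟨⟨m, n⟩, h⟩
      exact ⟨m, by grind⟩
    · rintro ⟨m, hm⟩
      exact ⟨(m, m - y), by grind⟩

end ParitySublattices

theorem representation_numbers_identity_general {S : Set (ℤ × ℤ)} (hS : S.Finite) :
    Nat.card {p : ℤ × ℤ // (2 * p.1, p.2) ∈ S} + Nat.card {p : ℤ × ℤ // (p.1, 2 * p.2) ∈ S}
        + Nat.card {p : ℤ × ℤ // (p.1 + p.2, p.1 - p.2) ∈ S}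
      = S.ncard + 2 * Nat.card {p : ℤ × ℤ // (2 * p.1, 2 * p.2) ∈ S} := by
  have cover : S ∩ {q | Even q.1} ∪ S ∩ {q | Even q.2} ∪ S ∩ {q | Even (q.1 + q.2)} = S := by
    ext q
    simp only [mem_union, mem_inter_iff, mem_ofPred_eq, Int.even_add]
    tauto
  have inter_fst_snd : S ∩ {q | Even q.1} ∩ (S ∩ {q | Even q.2})
      = S ∩ {q | Even q.1 ∧ Even q.2} := (inter_inter_distrib_left _ _ _).symm
  have inter_union_sum : (S ∩ {q | Even q.1} ∪ S ∩ {q | Even q.2}) ∩ (S ∩ {q | Even (q.1 + q.2)})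
      = S ∩ {q | Even q.1 ∧ Even q.2} := by
    ext q
    simp only [mem_union, mem_inter_iff, mem_ofPred_eq, Int.even_add]
    tauto
  rw [natCard_two_mul_fst_mem, natCard_two_mul_snd_mem, natCard_add_sub_mem,
    natCard_two_mul_fst_two_mul_snd_mem, ncard_add_ncard_add_ncard_of_inter_eq
      (hS.inter_of_left _) (hS.inter_of_left _) (hS.inter_of_left _) inter_fst_snd inter_union_sum,
    cover]

theorem finite_sq_add_sq_eq (k : ℤ) : {p : ℤ × ℤ | p.1 ^ 2 + p.2 ^ 2 = k}.Finite := by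
  refine ((finite_Icc (-k) k).prod (finite_Icc (-k) k)).subset fun p (hp : _ = k) => ?_
  have abs_le_sq (x : ℤ) : |x| ≤ x ^ 2 := x.abs_eq_natAbs ▸ x.natAbs_le_self_sq
  have hfst : |p.1| ≤ k := by linarith [abs_le_sq p.1, sq_nonneg p.2]
  have hsnd : |p.2| ≤ k := by linarith [abs_le_sq p.2, sq_nonneg p.1]
  exact ⟨abs_le.mp hfst, abs_le.mp hsnd⟩

/-- For every natural number `k`, the quadratic forms `4m² + n²` (counted twice) and
`2m² + 2n²` together represent `k` over the integers the same number of times as the forms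
`m² + n²` and `4m² + 4n²` (counted twice) together. -/
theorem representation_numbers_identity (k : ℕ) :
    2 * Nat.card {mn : ℤ × ℤ // 4 * mn.1 ^ 2 + mn.2 ^ 2 = (k : ℤ)}
        + Nat.card {mn : ℤ × ℤ // 2 * mn.1 ^ 2 + 2 * mn.2 ^ 2 = (k : ℤ)}
      = Nat.card {mn : ℤ × ℤ // mn.1 ^ 2 + mn.2 ^ 2 = (k : ℤ)}
        + 2 * Nat.card {mn : ℤ × ℤ // 4 * mn.1 ^ 2 + 4 * mn.2 ^ 2 = (k : ℤ)} := by
  have swap : Nat.card {mn : ℤ × ℤ // mn.1 ^ 2 + 4 * mn.2 ^ 2 = (k : ℤ)}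
      = Nat.card {mn : ℤ × ℤ // 4 * mn.1 ^ 2 + mn.2 ^ 2 = (k : ℤ)} :=
    Nat.card_congr ((Equiv.prodComm ℤ ℤ).subtypeEquiv fun p => by simp [add_comm])
  have parallelogram (m n : ℤ) : (m + n) ^ 2 + (m - n) ^ 2 = 2 * m ^ 2 + 2 * n ^ 2 := by ring
  have two_mul_sq (m : ℤ) : (2 * m) ^ 2 = 4 * m ^ 2 := by ring
  have count := representation_numbers_identity_general (finite_sq_add_sq_eq k)
  simp only [mem_ofPred_eq, parallelogram, two_mul_sq, swap, ← two_mul] at count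
  exact count
end
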